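/- Let φ : ℝ → ℝ be bounded, nonnegative, equal to 0 on (1, ∞), and continuous outside a finite subset of ℝ, and define f : ℝ³ → ℝ by f(x) = φ(‖x‖) (so f is bounded, nonnegative, spherically symmetric, supported in the closed unit ball). Then there exists a sequence (f_n)_{n≥1} of functions ℝ³ → ℝ, each C^∞, nonnegative, spherically symmetric, and supported in the closed ball of radius 2 centered at the origin, such that f_n(x) ≥ f(x) for all x ∈ ℝ³ and all n, and ∫_{ℝ³} |f_n(x) − f(x)| dx → 0 as n → ∞. -/

import Mathlib

open MeasureTheory Metric Filter

/-!
Put `g t = φ √t`. A smooth partition of unity produces, for each `ε > 0`, a smooth `w : ℝ → ℝ`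
whose value at `t` lies between `g t` and the supremum of `g` over the `ε`-ball around `t`. Hence
`w` majorizes `g`, respects its upper bound, vanishes wherever `g` vanishes on an `ε`-ball (so no
cutoff is needed), and tends to `g` at continuity points as `ε → 0`. The functions
`x ↦ w (‖x‖ ^ 2)` are smooth also at the origin, and dominated convergence concludes.
-/

open scoped Topology ContDiff

section LocalSupremum

theorem tendsto_sSup_image_ball {X : Type*} [PseudoMetricSpace X] {g : X → ℝ} {x : X}
    (hg : ContinuousAt g x) :
    Tendsto (fun ε => sSup (g '' ball x ε)) (𝓝[>] 0) (𝓝 (g x)) := by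
  refine Metric.tendsto_nhds.2 fun η hη => ?_
  obtain ⟨δ, hδ, hgδ⟩ := Metric.continuousAt_iff.1 hg (η / 2) (half_pos hη)
  filter_upwards [Ioo_mem_nhdsGT hδ] with ε ⟨hε, hεδ⟩
  have hub : g x + η / 2 ∈ upperBounds (g '' ball x ε) := by
    rintro _ ⟨y, hy, rfl⟩
    have := (abs_lt.1 (hgδ (lt_trans hy hεδ))).2
    linarith
  have hx : g x ∈ g '' ball x ε := Set.mem_image_of_mem g (mem_ball_self hε)
  have hlower : g x ≤ sSup (g '' ball x ε) := le_csSup ⟨_, hub⟩ hx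
  have hupper : sSup (g '' ball x ε) ≤ g x + η / 2 := csSup_le ⟨_, hx⟩ hub
  rw [Real.dist_eq, abs_of_nonneg (sub_nonneg.2 hlower)]
  linarith

variable {E : Type*} [NormedAddCommGroup E] [NormedSpace ℝ E] [FiniteDimensional ℝ E] {g : E → ℝ}

theorem exists_contDiff_mem_Icc_sSup_image_ball {ε : ℝ} (hε : 0 < ε)
    (hg : ∀ x, BddAbove (g '' ball x ε)) :
    ∃ w : E → ℝ, ContDiff ℝ ∞ w ∧ ∀ x, w x ∈ Set.Icc (g x) (sSup (g '' ball x ε)) := by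
  -- Near `x`, the constant `sSup (g '' ball x (ε / 2))` is an admissible value.
  have hlocal : ∀ x, ∃ c, ∀ᶠ y in 𝓝 x, c ∈ Set.Icc (g y) (sSup (g '' ball y ε)) := by
    refine fun x => ⟨sSup (g '' ball x (ε / 2)), ?_⟩
    filter_upwards [ball_mem_nhds x (half_pos hε)] with y hy
    have hsub {z : E} (hz : z ∈ ball x (ε / 2)) : ball x (ε / 2) ⊆ ball z ε :=
      ball_subset_ball' (by linarith [mem_ball'.1 hz])
    have hyx : g y ∈ g '' ball x (ε / 2) := Set.mem_image_of_mem g hy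
    exact ⟨le_csSup ((hg y).mono (Set.image_mono (hsub hy))) hyx,
      csSup_le_csSup (hg y) ⟨_, hyx⟩ (Set.image_mono (hsub hy))⟩
  obtain ⟨w, hw⟩ := exists_contMDiffMap_forall_mem_convex_of_local_const
    (modelWithCornersSelf ℝ E) (n := ⊤) (fun x => convex_Icc (g x) (sSup (g '' ball x ε))) hlocal
  exact ⟨w, w.contMDiff.contDiff, hw⟩

theorem exists_seq_contDiff_majorant {δ : ℝ} (hδ : 0 < δ) (hg : ∀ x, BddAbove (g '' ball x δ)) :
    ∃ w : ℕ → E → ℝ, (∀ n, ContDiff ℝ ∞ (w n)) ∧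
      (∀ n x, w n x ∈ Set.Icc (g x) (sSup (g '' ball x δ))) ∧
      ∀ x, ContinuousAt g x → Tendsto (fun n => w n x) atTop (𝓝 (g x)) := by
  obtain ⟨ε, -, hε, hε_lim⟩ := exists_seq_strictAnti_tendsto' hδ
  have himage (n : ℕ) (x : E) : g '' ball x (ε n) ⊆ g '' ball x δ :=
    Set.image_mono (ball_subset_ball (hε n).2.le)
  choose w hw_smooth hw using fun n =>
    exists_contDiff_mem_Icc_sSup_image_ball (hε n).1 fun x => (hg x).mono (himage n x)
  refine ⟨w, hw_smooth, fun n x => ⟨(hw n x).1, (hw n x).2.trans ?_⟩, fun x hx => ?_⟩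
  · exact csSup_le_csSup (hg x) ⟨_, Set.mem_image_of_mem g (mem_ball_self (hε n).1)⟩ (himage n x)
  · have hε_pos : Tendsto ε atTop (𝓝[>] 0) :=
      tendsto_nhdsWithin_iff.2 ⟨hε_lim, Eventually.of_forall fun n => (hε n).1⟩
    exact tendsto_of_tendsto_of_tendsto_of_le_of_le tendsto_const_nhds
      ((tendsto_sSup_image_ball hx).comp hε_pos) (fun n => (hw n x).1) fun n => (hw n x).2

end LocalSupremum

theorem tendsto_integral_abs_sub_of_support_subset {X : Type*} [MeasurableSpace X] {μ : Measure X}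
    {K : Set X} (hK : MeasurableSet K) (hμK : μ K ≠ ⊤) {F : ℕ → X → ℝ} {f : X → ℝ} {M : ℝ}
    (hF_meas : ∀ n, AEStronglyMeasurable (F n) μ) (hF_supp : ∀ n, Function.support (F n) ⊆ K)
    (hF_le : ∀ n x, F n x ≤ M) (hf_nonneg : ∀ x, 0 ≤ f x) (hfF : ∀ n x, f x ≤ F n x)
    (hlim : ∀ᵐ x ∂μ, Tendsto (fun n => F n x) atTop (𝓝 (f x))) :
    Tendsto (fun n => ∫ x, |F n x - f x| ∂μ) atTop (𝓝 0) := by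
  have hf_meas : AEStronglyMeasurable f μ := aestronglyMeasurable_of_tendsto_ae atTop hF_meas hlim
  have hbound : ∀ n x, ‖|F n x - f x|‖ ≤ K.indicator (fun _ => M) x := by
    intro n x
    rw [norm_abs_eq_norm, Real.norm_of_nonneg (sub_nonneg.2 (hfF n x))]
    by_cases hx : x ∈ K
    · rw [Set.indicator_of_mem hx]
      linarith [hF_le n x, hf_nonneg x]
    · rw [Set.indicator_of_notMem hx, Function.notMem_support.1 (mt (@hF_supp n x) hx)]
      linarith [hf_nonneg x]
  have habs : ∀ᵐ x ∂μ, Tendsto (fun n => |F n x - f x|) atTop (𝓝 0) := by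
    filter_upwards [hlim] with x hx
    simpa using (hx.sub_const (f x)).abs
  simpa using tendsto_integral_of_dominated_convergence (K.indicator fun _ => M)
    (fun n => ((hF_meas n).sub hf_meas).norm) ((integrable_indicator_iff hK).2
      (integrableOn_const hμK)) (fun n => Eventually.of_forall (hbound n)) habs

theorem ae_norm_notMem_of_countable {E : Type*} [NormedAddCommGroup E] [NormedSpace ℝ E]
    [FiniteDimensional ℝ E] [Nontrivial E] [MeasurableSpace E] [BorelSpace E] (μ : Measure E)
    [μ.IsAddHaarMeasure] {S : Set ℝ} (hS : S.Countable) : ∀ᵐ x ∂μ, ‖x‖ ∉ S := by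
  have hsphere : ∀ᵐ x ∂μ, ∀ r ∈ S, x ∉ sphere (0 : E) r :=
    (ae_ball_iff hS).2 fun r _ => measure_eq_zero_iff_ae_notMem.1 (Measure.addHaar_sphere μ 0 r)
  filter_upwards [hsphere] with x hx hxS
  exact hx _ hxS (mem_sphere_zero_iff_norm.2 rfl)

section Radial

variable {E : Type*} [NormedAddCommGroup E] [InnerProductSpace ℝ E]

theorem exists_seq_contDiff_radial_majorant {φ : ℝ → ℝ} {M r R : ℝ} (hr : 0 ≤ r) (hrR : r < R)
    (hφ_bdd : ∀ t, φ t ≤ M) (hφ_nonneg : ∀ t, 0 ≤ φ t) (hφ_zero : ∀ t, r < t → φ t = 0) :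
    ∃ F : ℕ → E → ℝ, (∀ n, ContDiff ℝ ∞ (F n)) ∧ (∀ n x y, ‖x‖ = ‖y‖ → F n x = F n y) ∧
      (∀ n, Function.support (F n) ⊆ closedBall 0 R) ∧ (∀ n x, φ ‖x‖ ≤ F n x) ∧
      (∀ n x, F n x ≤ M) ∧
      ∀ x, ContinuousAt φ ‖x‖ → Tendsto (fun n => F n x) atTop (𝓝 (φ ‖x‖)) := by
  have hδ : 0 < R ^ 2 - r ^ 2 := sub_pos.2 (pow_lt_pow_left₀ hrR hr two_ne_zero)
  obtain ⟨w, hw_smooth, hw, hw_lim⟩ := exists_seq_contDiff_majorant (g := fun t => φ √t) hδ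
    fun _ => ⟨M, Set.forall_mem_image.2 fun t _ => hφ_bdd √t⟩
  have hw_le {n : ℕ} {t B : ℝ} (hB : ∀ s ∈ ball t (R ^ 2 - r ^ 2), φ √s ≤ B) : w n t ≤ B :=
    (hw n t).2.trans (csSup_le ⟨_, Set.mem_image_of_mem _ (mem_ball_self hδ)⟩
      (Set.forall_mem_image.2 hB))
  have hsqrt (x : E) : √(‖x‖ ^ 2) = ‖x‖ := Real.sqrt_sq (norm_nonneg x)
  have hmajor (n : ℕ) (x : E) : φ ‖x‖ ≤ w n (‖x‖ ^ 2) := by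
    have h := (hw n (‖x‖ ^ 2)).1
    rwa [hsqrt] at h
  refine ⟨fun n x => w n (‖x‖ ^ 2), fun n => (hw_smooth n).comp (contDiff_norm_sq ℝ),
    fun n x y hxy => by simp only [hxy], fun n => Function.support_subset_iff'.2 fun x hx => ?_,
    hmajor, fun n x => hw_le fun s _ => hφ_bdd √s, fun x hx => ?_⟩
  · have hRx : R ^ 2 < ‖x‖ ^ 2 := pow_lt_pow_left₀
      (not_le.1 (mt mem_closedBall_zero_iff.2 hx)) (hr.trans hrR.le) two_ne_zero
    refine le_antisymm (hw_le fun s hs => (hφ_zero _ (Real.lt_sqrt_of_sq_lt ?_)).le)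
      ((hφ_nonneg _).trans (hmajor n x))
    rw [Real.ball_eq_Ioo] at hs
    linarith [hs.1]
  · rw [← hsqrt x] at hx
    simpa only [hsqrt] using hw_lim (‖x‖ ^ 2) (hx.comp Real.continuous_sqrt.continuousAt)

theorem smooth_spherical_majorant_approx_general [FiniteDimensional ℝ E] [MeasurableSpace E]
    [BorelSpace E] (μ : Measure E) [IsFiniteMeasureOnCompacts μ] {φ : ℝ → ℝ} {M r R : ℝ}
    (hr : 0 ≤ r) (hrR : r < R) (hφ_bdd : ∀ t, φ t ≤ M) (hφ_nonneg : ∀ t, 0 ≤ φ t)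
    (hφ_zero : ∀ t, r < t → φ t = 0) (hφ_cont : ∀ᵐ x ∂μ, ContinuousAt φ ‖x‖) :
    ∃ F : ℕ → E → ℝ, (∀ n, ContDiff ℝ ∞ (F n)) ∧ (∀ n x, 0 ≤ F n x) ∧
      (∀ n x y, ‖x‖ = ‖y‖ → F n x = F n y) ∧ (∀ n, Function.support (F n) ⊆ closedBall 0 R) ∧
      (∀ n x, φ ‖x‖ ≤ F n x) ∧
      Tendsto (fun n => ∫ x, |F n x - φ ‖x‖| ∂μ) atTop (𝓝 0) := by
  obtain ⟨F, hF_smooth, hF_radial, hF_supp, hF_ge, hF_le, hF_lim⟩ :=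
    exists_seq_contDiff_radial_majorant (E := E) hr hrR hφ_bdd hφ_nonneg hφ_zero
  have hF_tendsto : ∀ᵐ x ∂μ, Tendsto (fun n => F n x) atTop (𝓝 (φ ‖x‖)) :=
    hφ_cont.mono hF_lim
  exact ⟨F, hF_smooth, fun n x => (hφ_nonneg _).trans (hF_ge n x), hF_radial, hF_supp, hF_ge,
    tendsto_integral_abs_sub_of_support_subset measurableSet_closedBall
      measure_closedBall_lt_top.ne (fun n => (hF_smooth n).continuous.aestronglyMeasurable)
      hF_supp hF_le (fun _ => hφ_nonneg _) hF_ge hF_tendsto⟩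

end Radial

/-- A bounded, nonnegative, spherically symmetric function supported in the
unit ball, continuous outside a finite set of radii, can be approximated in `L¹` from above by
smooth, nonnegative, spherically symmetric functions supported in the ball of radius `2`. -/
theorem smooth_spherical_majorant_approx
    (φ : ℝ → ℝ) (M : ℝ) (hφ_bdd : ∀ r, φ r ≤ M) (hφ_nonneg : ∀ r, 0 ≤ φ r)
    (hφ_zero : ∀ r, 1 < r → φ r = 0)
    (S : Finset ℝ) (hφ_cont : ∀ r ∉ S, ContinuousAt φ r)
    (f : EuclideanSpace ℝ (Fin 3) → ℝ) (hf : ∀ x, f x = φ ‖x‖) :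
    ∃ F : ℕ → EuclideanSpace ℝ (Fin 3) → ℝ,
      (∀ n, 1 ≤ n → ContDiff ℝ (⊤ : ℕ∞) (F n)) ∧
      (∀ n, 1 ≤ n → ∀ x, 0 ≤ F n x) ∧
      (∀ n, 1 ≤ n → ∀ x y, ‖x‖ = ‖y‖ → F n x = F n y) ∧
      (∀ n, 1 ≤ n →
        Function.support (F n) ⊆ closedBall (0 : EuclideanSpace ℝ (Fin 3)) 2) ∧
      (∀ n, 1 ≤ n → ∀ x, f x ≤ F n x) ∧
      Tendsto (fun n => ∫ x, |F n x - f x|) atTop (nhds 0) := by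
  obtain rfl : f = fun x => φ ‖x‖ := funext hf
  have hφ_cont_ae : ∀ᵐ x : EuclideanSpace ℝ (Fin 3), ContinuousAt φ ‖x‖ :=
    (ae_norm_notMem_of_countable volume S.countable_toSet).mono fun x => hφ_cont ‖x‖
  obtain ⟨F, hF_smooth, hF_nonneg, hF_radial, hF_supp, hF_ge, hF_lim⟩ :=
    smooth_spherical_majorant_approx_general volume zero_le_one one_lt_two hφ_bdd hφ_nonneg
      hφ_zero hφ_cont_ae
  exact ⟨F, fun n _ => hF_smooth n, fun n _ => hF_nonneg n, fun n _ => hF_radial n,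
    fun n _ => hF_supp n, fun n _ => hF_ge n, hF_lim⟩
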